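/- Let (G, u, v, U, V) be (3/2)-good, let x and y be two distinct isolated vertices of G, and let G′ be the graph obtained from G by adding the edge xy. Then there exist a pair of nonadjacent vertices a, b of G′ and disjoint vertex sets U′ ⊇ U and V′ ⊇ V such that (G′ + ab, u, v, U′, V′) is (3/2)-good. -/

import Mathlib

open SimpleGraph

/-- The graph obtained from `G` by adding the edge `xy`. -/
def addEdge {α : Type*} (G : SimpleGraph α) (x y : α) : SimpleGraph α :=
  G ⊔ SimpleGraph.fromEdgeSet {s(x, y)}

/-- `b_U = |V₁| + |U| − γ|V| − δ`, where `V₁ = V ∖ N_G(u)` and `δ = 1/(γ−1)`. -/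
noncomputable def bU {α : Type*} (γ : ℝ) (G : SimpleGraph α) (u : α) (U V : Set α) : ℝ :=
  ((V \ G.neighborSet u).ncard : ℝ) + U.ncard - γ * V.ncard - 1 / (γ - 1)

/-- `b_V = |U₁| + |V| − γ|U| − δ`, where `U₁ = U ∖ N_G(v)` and `δ = 1/(γ−1)`. -/
noncomputable def bV {α : Type*} (γ : ℝ) (G : SimpleGraph α) (v : α) (U V : Set α) : ℝ :=
  ((U \ G.neighborSet v).ncard : ℝ) + V.ncard - γ * U.ncard - 1 / (γ - 1)

/-- The tuple `(G, u, v, U, V)` is `γ`-good. -/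
def GammaGood {α : Type*} (γ : ℝ) (G : SimpleGraph α) (u v : α) (U V : Set α) : Prop :=
  G.Adj u v ∧ u ∈ U ∧ v ∈ V ∧ Disjoint U V ∧
  -- (1*): exactly one connected component contains an edge, its vertex set is `U ∪ V`,
  -- and it is bipartite with parts `U` and `V` (both independent sets)
  (∃! c : G.ConnectedComponent, ∃ x y, G.Adj x y ∧ G.connectedComponentMk x = c) ∧
  {w | G.connectedComponentMk w = G.connectedComponentMk u} = U ∪ V ∧
  (∀ a ∈ U, ∀ b ∈ U, ¬ G.Adj a b) ∧
  (∀ a ∈ V, ∀ b ∈ V, ¬ G.Adj a b) ∧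
  -- (2*): every vertex of `U ∪ V` has a neighbor in `U₀ ∪ V₀ = N(v) ∪ N(u)`
  (∀ w ∈ U ∪ V, ∃ z ∈ G.neighborSet v ∪ G.neighborSet u, G.Adj w z) ∧
  -- (3*) and (4*)
  bU γ G u U V ≤ 0 ∧ bV γ G v U V ≤ 0 ∧ bU γ G u U V + bV γ G v U V ≤ -2

/-! A pendant path `u - x - y` is attached to `G`, where `x` joins `V` and `y` joins `U`. The new
vertex `x` is a neighbor of `u`, so `V₁` does not grow while `U₁` gains `y`; hence `b_U` changes by
`1 - γ` and `b_V` by `2 - γ`. For `γ ≥ 3/2` the sum `b_U + b_V` does not increase, and `b_V ≤ 0`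
survives as soon as `b_V ≤ γ - 2`. By (4*) this holds for one of `b_U`, `b_V`, and the definition is
symmetric under exchanging `(u, U)` with `(v, V)`. -/

section AddEdge

variable {α : Type*} {G : SimpleGraph α} {v x y p q : α}

theorem addEdge_adj :
    (addEdge G x y).Adj p q ↔ G.Adj p q ∨ (p = x ∧ q = y ∨ p = y ∧ q = x) ∧ p ≠ q := by
  simp [addEdge]

theorem le_addEdge (G : SimpleGraph α) (x y : α) : G ≤ addEdge G x y :=
  le_sup_left

theorem addEdge_adj_self (hxy : x ≠ y) : (addEdge G x y).Adj x y :=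
  addEdge_adj.mpr (.inr ⟨.inl ⟨rfl, rfl⟩, hxy⟩)

theorem addEdge_right_comm (G : SimpleGraph α) (x y p q : α) :
    addEdge (addEdge G x y) p q = addEdge (addEdge G p q) x y :=
  sup_right_comm ..

theorem neighborSet_addEdge_left (hxy : x ≠ y) :
    (addEdge G x y).neighborSet x = insert y (G.neighborSet x) := by
  ext w
  simp only [mem_neighborSet, addEdge_adj, Set.mem_insert_iff]
  grind

theorem neighborSet_addEdge_of_ne (hx : v ≠ x) (hy : v ≠ y) :
    (addEdge G x y).neighborSet v = G.neighborSet v := by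
  ext w
  simp [addEdge_adj, hx, hy]

end AddEdge

/-- The part of `γ`-goodness that does not involve `γ`: `uv` is an edge from `U` to `V`, and
conditions (1*) and (2*) hold. Connectedness of `U ∪ V` is not recorded, since (2*) joins every
vertex of `U ∪ V` to `u` or `v` by a path of length two. -/
structure IsBipartiteAround {α : Type*} (G : SimpleGraph α) (u v : α) (U V : Set α) : Prop where
  adj : G.Adj u v
  left_mem : u ∈ U
  right_mem : v ∈ V
  isBipartiteWith : G.IsBipartiteWith U V
  exists_adj : ∀ w ∈ U ∪ V, ∃ z ∈ G.neighborSet v ∪ G.neighborSet u, G.Adj w z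

namespace IsBipartiteAround

variable {α : Type*} {G : SimpleGraph α} {u v w x y p : α} {U V : Set α}

theorem swap (h : IsBipartiteAround G u v U V) : IsBipartiteAround G v u V U where
  adj := h.adj.symm
  left_mem := h.right_mem
  right_mem := h.left_mem
  isBipartiteWith := h.isBipartiteWith.symm
  exists_adj := by simpa only [Set.union_comm] using h.exists_adj

theorem mem_of_adj (h : IsBipartiteAround G u v U V) (hwp : G.Adj w p) : w ∈ U ∪ V :=
  (h.isBipartiteWith.mem_of_adj hwp).imp And.left And.left

theorem notMem_left (h : IsBipartiteAround G u v U V) (hx : G.IsIsolated x) : x ∉ U := fun hxU ↦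
  let ⟨z, _, hxz⟩ := h.exists_adj x (.inl hxU)
  hx z hxz

theorem notMem_right (h : IsBipartiteAround G u v U V) (hx : G.IsIsolated x) : x ∉ V :=
  h.swap.notMem_left hx

theorem reachable_iff_mem (h : IsBipartiteAround G u v U V) : G.Reachable w u ↔ w ∈ U ∪ V := by
  constructor
  · rintro ⟨_ | ⟨hwp, _⟩⟩
    · exact .inl h.left_mem
    · exact h.mem_of_adj hwp
  · intro hw
    obtain ⟨z, hvz | huz, hwz⟩ := h.exists_adj w hw
    · exact hwz.reachable.trans (hvz.symm.reachable.trans h.adj.symm.reachable)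
    · exact hwz.reachable.trans huz.symm.reachable

theorem existsUnique_component (h : IsBipartiteAround G u v U V) :
    ∃! c : G.ConnectedComponent, ∃ x y, G.Adj x y ∧ G.connectedComponentMk x = c := by
  refine ⟨G.connectedComponentMk u, ⟨u, v, h.adj, rfl⟩, ?_⟩
  rintro _ ⟨x, y, hxy, rfl⟩
  exact ConnectedComponent.eq.mpr (h.reachable_iff_mem.mpr (h.mem_of_adj hxy))

theorem insert_left (h : IsBipartiteAround G u v U V) (hy : G.IsIsolated y) (hp : G.Adj u p) :
    IsBipartiteAround (addEdge G p y) u v (insert y U) V := by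
  have hpV : p ∈ V := h.isBipartiteWith.mem_of_mem_adj h.left_mem hp
  have hpy : (addEdge G p y).Adj p y := addEdge_adj_self fun hpy ↦ hy u (hpy ▸ hp.symm)
  have hle : G ≤ addEdge G p y := le_addEdge G p y
  refine ⟨hle h.adj, .inr h.left_mem, h.right_mem, ⟨?_, fun a b hab ↦ ?_⟩, ?_⟩
  · exact Set.disjoint_insert_left.mpr ⟨h.notMem_right hy, h.isBipartiteWith.disjoint⟩
  · rcases addEdge_adj.mp hab with hab | ⟨⟨rfl, rfl⟩ | ⟨rfl, rfl⟩, -⟩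
    · exact (h.isBipartiteWith.mem_of_adj hab).imp (.imp_left .inr) (.imp_right .inr)
    · exact .inr ⟨hpV, .inl rfl⟩
    · exact .inl ⟨.inl rfl, hpV⟩
  · intro w hw
    obtain rfl | hw : w = y ∨ w ∈ U ∪ V := by rwa [Set.insert_union] at hw
    · exact ⟨p, .inr (hle hp), hpy.symm⟩
    · obtain ⟨z, hz, hwz⟩ := h.exists_adj w hw
      exact ⟨z, hz.imp (fun hvz ↦ hle hvz) (fun huz ↦ hle huz), hle hwz⟩

theorem insert_right (h : IsBipartiteAround G u v U V) (hx : G.IsIsolated x) (hp : G.Adj v p) :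
    IsBipartiteAround (addEdge G p x) u v U (insert x V) :=
  (h.swap.insert_left hx hp).swap

theorem insert_insert (h : IsBipartiteAround G u v U V) (hx : G.IsIsolated x)
    (hy : G.IsIsolated y) (hxy : x ≠ y) :
    IsBipartiteAround (addEdge (addEdge G x y) u x) u v (insert y U) (insert x V) := by
  have hux : u ≠ x := ne_of_mem_of_not_mem h.left_mem (h.notMem_left hx)
  have huy : u ≠ y := ne_of_mem_of_not_mem h.left_mem (h.notMem_left hy)
  have hy' : (addEdge G u x).IsIsolated y := by
    rwa [← neighborSet_eq_empty, neighborSet_addEdge_of_ne huy.symm hxy.symm, neighborSet_eq_empty]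
  rw [addEdge_right_comm]
  exact (h.insert_right hx h.adj.symm).insert_left hy' (addEdge_adj_self hux)

theorem bU_insert_insert (h : IsBipartiteAround G u v U V) (γ : ℝ) (hU : U.Finite) (hV : V.Finite)
    (hx : G.IsIsolated x) (hy : G.IsIsolated y) :
    bU γ (addEdge (addEdge G x y) u x) u (insert y U) (insert x V) = bU γ G u U V + (1 - γ) := by
  have hxV : x ∉ V := h.notMem_right hx
  have hyU : y ∉ U := h.notMem_left hy
  have hux : u ≠ x := ne_of_mem_of_not_mem h.left_mem (h.notMem_left hx)
  have huy : u ≠ y := ne_of_mem_of_not_mem h.left_mem hyU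
  have hV₁ : insert x V \ (addEdge (addEdge G x y) u x).neighborSet u = V \ G.neighborSet u := by
    rw [neighborSet_addEdge_left hux, neighborSet_addEdge_of_ne hux huy,
      Set.insert_sdiff_of_mem _ (Set.mem_insert ..), Set.sdiff_insert_of_notMem hxV]
  rw [bU, bU, hV₁, Set.ncard_insert_of_notMem hyU hU, Set.ncard_insert_of_notMem hxV hV]
  push_cast
  ring

theorem bV_insert_insert (h : IsBipartiteAround G u v U V) (γ : ℝ) (hU : U.Finite) (hV : V.Finite)
    (hx : G.IsIsolated x) (hy : G.IsIsolated y) :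
    bV γ (addEdge (addEdge G x y) u x) v (insert y U) (insert x V) = bV γ G v U V + (2 - γ) := by
  have hxV : x ∉ V := h.notMem_right hx
  have hyU : y ∉ U := h.notMem_left hy
  have hvx : v ≠ x := ne_of_mem_of_not_mem h.right_mem hxV
  have hvy : v ≠ y := ne_of_mem_of_not_mem h.right_mem (h.notMem_right hy)
  have hU₁ : insert y U \ (addEdge (addEdge G x y) u x).neighborSet v =
      insert y (U \ G.neighborSet v) := by
    rw [neighborSet_addEdge_of_ne h.adj.ne' hvx, neighborSet_addEdge_of_ne hvx hvy,
      Set.insert_sdiff_of_notMem _ fun hadj ↦ hy v hadj.symm]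
  rw [bV, bV, hU₁, Set.ncard_insert_of_notMem (fun hy' ↦ hyU hy'.1) hU.sdiff,
    Set.ncard_insert_of_notMem hyU hU, Set.ncard_insert_of_notMem hxV hV]
  push_cast
  ring

end IsBipartiteAround

section GammaGood

variable {α : Type*} {γ : ℝ} {G : SimpleGraph α} {u v x y : α} {U V : Set α}

theorem gammaGood_iff : GammaGood γ G u v U V ↔ IsBipartiteAround G u v U V ∧
    bU γ G u U V ≤ 0 ∧ bV γ G v U V ≤ 0 ∧ bU γ G u U V + bV γ G v U V ≤ -2 := by
  constructor
  · rintro ⟨huv, hu, hv, hdisj, hcomp, hsupp, hU, hV, hdom, hb⟩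
    have hmem : ∀ {a b}, G.Adj a b → a ∈ U ∪ V := fun {a b} hab ↦
      hsupp.subset (hcomp.unique ⟨a, b, hab, rfl⟩ ⟨u, v, huv, rfl⟩)
    refine ⟨⟨huv, hu, hv, ⟨hdisj, fun a b hab ↦ ?_⟩, hdom⟩, hb⟩
    rcases hmem hab, hmem hab.symm with ⟨ha | ha, hb | hb⟩
    · exact absurd hab (hU a ha b hb)
    · exact .inl ⟨ha, hb⟩
    · exact .inr ⟨ha, hb⟩
    · exact absurd hab (hV a ha b hb)
  · rintro ⟨h, hb⟩
    have hbip := h.isBipartiteWith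
    refine ⟨h.adj, h.left_mem, h.right_mem, hbip.disjoint, h.existsUnique_component, ?_,
      fun a ha b hb hab ↦ ?_, fun a ha b hb hab ↦ ?_, h.exists_adj, hb⟩
    · ext w
      exact ConnectedComponent.eq.trans h.reachable_iff_mem
    · exact hbip.disjoint.notMem_of_mem_left hb (hbip.mem_of_mem_adj ha hab)
    · exact hbip.disjoint.notMem_of_mem_right hb (hbip.symm.mem_of_mem_adj ha hab)

namespace GammaGood

theorem swap (h : GammaGood γ G u v U V) : GammaGood γ G v u V U := by
  obtain ⟨hG, hbU, hbV, hsum⟩ := gammaGood_iff.mp h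
  exact gammaGood_iff.mpr ⟨hG.swap, hbV, hbU, (add_comm ..).trans_le hsum⟩

theorem insert_insert (h : GammaGood γ G u v U V) (hγ : 3 / 2 ≤ γ) (hU : U.Finite) (hV : V.Finite)
    (hx : G.IsIsolated x) (hy : G.IsIsolated y) (hxy : x ≠ y) (hb : bV γ G v U V ≤ γ - 2) :
    GammaGood γ (addEdge (addEdge G x y) u x) u v (insert y U) (insert x V) := by
  obtain ⟨hG, hbU, -, hsum⟩ := gammaGood_iff.mp h
  refine gammaGood_iff.mpr ⟨hG.insert_insert hx hy hxy, ?_⟩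
  rw [hG.bU_insert_insert γ hU hV hx hy, hG.bV_insert_insert γ hU hV hx hy]
  refine ⟨?_, ?_, ?_⟩ <;> linarith

end GammaGood

end GammaGood

theorem stmt_16_general {α : Type*} {γ : ℝ} (hγ : 3 / 2 ≤ γ)
    (G : SimpleGraph α) (u v : α) (U V : Set α) (hU : U.Finite) (hV : V.Finite)
    (hg : GammaGood γ G u v U V)
    (x y : α) (hxy : x ≠ y) (hx : G.IsIsolated x) (hy : G.IsIsolated y) :
    ∃ a b : α, a ≠ b ∧ ¬ (addEdge G x y).Adj a b ∧
      ∃ U' V' : Set α, U ⊆ U' ∧ V ⊆ V' ∧ Disjoint U' V' ∧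
        GammaGood γ (addEdge (addEdge G x y) a b) u v U' V' := by
  wlog hb : bV γ G v U V ≤ γ - 2 generalizing u v U V
  · have hsum : bU γ G u U V + bV γ G v U V ≤ -2 := (gammaGood_iff.mp hg).2.2.2
    have hb' : bU γ G u U V ≤ γ - 2 := by linarith
    obtain ⟨a, b, hab, hnadj, V', U', hV', hU', hdisj, hg'⟩ := this v u V U hV hU hg.swap hb'
    exact ⟨a, b, hab, hnadj, U', V', hU', hV', hdisj.symm, hg'.swap⟩
  have hG : IsBipartiteAround G u v U V := (gammaGood_iff.mp hg).1
  have hux : u ≠ x := ne_of_mem_of_not_mem hG.left_mem (hG.notMem_left hx)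
  have huy : u ≠ y := ne_of_mem_of_not_mem hG.left_mem (hG.notMem_left hy)
  have hnadj : ¬ (addEdge G x y).Adj u x := by
    rw [← mem_neighborSet, neighborSet_addEdge_of_ne hux huy]
    exact fun hadj ↦ hx u hadj.symm
  have hg' := hg.insert_insert hγ hU hV hx hy hxy hb
  exact ⟨u, x, hux, hnadj, insert y U, insert x V, Set.subset_insert .., Set.subset_insert ..,
    (gammaGood_iff.mp hg').1.isBipartiteWith.disjoint, hg'⟩

theorem stmt_16 {α : Type*} [Fintype α]
    (G : SimpleGraph α) (u v : α) (U V : Set α)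
    (hg : GammaGood (3 / 2) G u v U V)
    (x y : α) (hxy : x ≠ y)
    (hx : G.neighborSet x = ∅) (hy : G.neighborSet y = ∅) :
    ∃ a b : α, a ≠ b ∧ ¬ (addEdge G x y).Adj a b ∧
      ∃ U' V' : Set α, U ⊆ U' ∧ V ⊆ V' ∧ Disjoint U' V' ∧
        GammaGood (3 / 2) (addEdge (addEdge G x y) a b) u v U' V' :=
  stmt_16_general le_rfl G u v U V U.toFinite V.toFinite hg x y hxy
    ((neighborSet_eq_empty G).mp hx) ((neighborSet_eq_empty G).mp hy)
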